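/- Let N ≥ 2 be an integer and let U be a unitary on (ℂ²)^{⊗N} of the form U = g_m ⋯ g_1 (g_1 applied first), where each g_j is Ry(θ) on some qubit for some real θ, or CNOT_{k,l} for some distinct qubits k, l ∈ {1,…,N}. Then there exist an integer M ≤ (96·N² + 400·N)·m and real rotation angles such that the (N+4)-qubit Ry-CNOT ansatz circuit of depth M with those angles equals the unitary on (ℂ²)^{⊗(N+4)} acting as U on qubits 1,…,N and as the identity on qubits N+1,…,N+4. (This expresses the computational universality of the Ry-CNOT circuit family: with four ancilla qubits it exactly represents, with depth polynomial in N and m, every circuit over the computationally universal gate set {Ry, CNOT}.) -/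

import Mathlib

open Complex

noncomputable section

/-- Basis states of `N` qubits: bit strings of length `N` (qubit `k` (1-based) ↦ index `k-1`). -/
abbrev QState (N : ℕ) := Fin N → ZMod 2

/-- Operators on `(ℂ²)^{⊗N}`, as matrices in the computational basis. -/
abbrev QOp (N : ℕ) := Matrix (QState N) (QState N) ℂ

/-- Ry(θ) = [[cos(θ/2), −sin(θ/2)], [sin(θ/2), cos(θ/2)]]. -/
def RyM (θ : ℝ) : Matrix (ZMod 2) (ZMod 2) ℂ :=
  Matrix.of fun a b =>
    if a = 0 then (if b = 0 then ((Real.cos (θ/2) : ℝ) : ℂ) else -((Real.sin (θ/2) : ℝ) : ℂ))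
    else (if b = 0 then ((Real.sin (θ/2) : ℝ) : ℂ) else ((Real.cos (θ/2) : ℝ) : ℂ))

/-- Rz(θ) = diag(e^{−iθ/2}, e^{iθ/2}). -/
def RzM (θ : ℝ) : Matrix (ZMod 2) (ZMod 2) ℂ :=
  Matrix.of fun a b =>
    if a = b then
      (if a = 0 then Complex.exp (-(θ/2 : ℝ) * Complex.I) else Complex.exp ((θ/2 : ℝ) * Complex.I))
    else 0

/-- Hadamard gate. -/
def HM : Matrix (ZMod 2) (ZMod 2) ℂ :=
  Matrix.of fun a b => (1 / ((Real.sqrt 2 : ℝ) : ℂ)) * (if a = 1 ∧ b = 1 then -1 else 1)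

/-- T gate = diag(1, e^{iπ/4}). -/
def TM : Matrix (ZMod 2) (ZMod 2) ℂ :=
  Matrix.of fun a b =>
    if a = b then (if a = 0 then 1 else Complex.exp ((Real.pi/4 : ℝ) * Complex.I)) else 0

/-- S gate = diag(1, i). -/
def SM : Matrix (ZMod 2) (ZMod 2) ℂ :=
  Matrix.of fun a b => if a = b then (if a = 0 then 1 else Complex.I) else 0

/-- S† gate = diag(1, −i). -/
def SdgM : Matrix (ZMod 2) (ZMod 2) ℂ :=
  Matrix.of fun a b => if a = b then (if a = 0 then 1 else -Complex.I) else 0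

/-- Pauli X gate. -/
def XM : Matrix (ZMod 2) (ZMod 2) ℂ :=
  Matrix.of fun a b => if a = b then 0 else 1

/-- A single-qubit gate `g` acting on qubit with 0-based index `k`, identity elsewhere. -/
def gate1 {N : ℕ} (g : Matrix (ZMod 2) (ZMod 2) ℂ) (k : Fin N) : QOp N :=
  Matrix.of fun x y => if ∀ j, j ≠ k → x j = y j then g (x k) (y k) else 0

/-- CZ gate on (0-based) qubits `k`, `l`. -/
def CZg {N : ℕ} (k l : Fin N) : QOp N :=
  Matrix.of fun x y => if x = y then (if x k = 1 ∧ x l = 1 then (-1 : ℂ) else 1) else 0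

/-- CNOT gate with control `c` and target `t` (0-based): |y⟩ ↦ |y with bit t replaced by y t + y c⟩. -/
def CNOTg {N : ℕ} (c t : Fin N) : QOp N :=
  Matrix.of fun x y => if x = Function.update y t (y t + y c) then (1 : ℂ) else 0

/-- The `k`-th bit (0-based) of a basis state, `0` when out of range. -/
def bitAt {N : ℕ} (x : QState N) (k : ℕ) : ZMod 2 :=
  if h : k < N then x ⟨k, h⟩ else 0

/-- Ladder of CZ gates: `∏_{k=1}^{N−1} CZ_{k,k+1}` (all factors commute, so it is
the diagonal matrix with entry `(−1)^{#{adjacent 11 pairs}}`). -/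
def ladderCZ (N : ℕ) : QOp N :=
  Matrix.of fun x y =>
    if x = y then
      ∏ k ∈ Finset.range (N - 1), (if bitAt x k = 1 ∧ bitAt x (k + 1) = 1 then (-1 : ℂ) else 1)
    else 0

/-- First CNOT layer of the ladder: simultaneous CNOT_{k+1,k} for 1-based `k ∈ {1,…,N−1}`,
`k ≢ N (mod 2)` (control qubit `k+1`, target qubit `k`; disjoint pairs). -/
def layer1Map (N : ℕ) (y : QState N) : QState N :=
  fun i => if (i : ℕ) + 1 < N ∧ ((i : ℕ) + 1) % 2 ≠ N % 2 then y i + bitAt y ((i : ℕ) + 1) else y i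

/-- Second CNOT layer of the ladder: simultaneous CNOT_{k+1,k} for 1-based `k ∈ {1,…,N−1}`,
`k ≡ N (mod 2)`. -/
def layer2Map (N : ℕ) (y : QState N) : QState N :=
  fun i => if (i : ℕ) + 1 < N ∧ ((i : ℕ) + 1) % 2 = N % 2 then y i + bitAt y ((i : ℕ) + 1) else y i

/-- Ladder of CNOT gates: `L₂ · L₁` with `L₁` applied first. It is a permutation
matrix of the composed bit-string map. -/
def ladderCNOT (N : ℕ) : QOp N :=
  Matrix.of fun x y => if x = layer2Map N (layer1Map N y) then (1 : ℂ) else 0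

/-- Rotation layer `⊗_{k} Rz(β_k)·Ry(α_k)`. -/
def rotYZ {N : ℕ} (α β : Fin N → ℝ) : QOp N :=
  Matrix.of fun x y => ∏ k : Fin N, (RzM (β k) * RyM (α k)) (x k) (y k)

/-- The Ry-Rz-CZ ansatz of depth `M`:
`R_M · Ladder_CZ · R_{M−1} ⋯ Ladder_CZ · R_0` (`R_0` applied first), with
rotation layer `i` using angles `α i`, `β i`. -/
def ansatzYZ (N : ℕ) (α β : ℕ → Fin N → ℝ) : ℕ → QOp N
  | 0 => rotYZ (α 0) (β 0)
  | (M + 1) => rotYZ (α (M + 1)) (β (M + 1)) * ladderCZ N * ansatzYZ N α β M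

/-- Rotation layer `⊗_{k} Ry(α_k)`. -/
def rotY {N : ℕ} (α : Fin N → ℝ) : QOp N :=
  Matrix.of fun x y => ∏ k : Fin N, RyM (α k) (x k) (y k)

/-- The Ry-CNOT ansatz of depth `M`:
`R_M · Ladder_CNOT · R_{M−1} ⋯ Ladder_CNOT · R_0` (`R_0` applied first). -/
def ansatzY (N : ℕ) (α : ℕ → Fin N → ℝ) : ℕ → QOp N
  | 0 => rotY (α 0)
  | (M + 1) => rotY (α (M + 1)) * ladderCNOT N * ansatzY N α M

/-- Product of CZ gates `CZ_{q,q+1}` (1-based qubits) over all `q` satisfying `P`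
(a diagonal matrix, since all CZ's commute). -/
def czLayer (N : ℕ) (P : ℕ → Prop) [DecidablePred P] : QOp N :=
  Matrix.of fun x y =>
    if x = y then
      ∏ p ∈ Finset.range N,
        (if P (p + 1) ∧ bitAt x p = 1 ∧ bitAt x (p + 1) = 1 then (-1 : ℂ) else 1)
    else 0

/-- Hadamard gates on all 1-based qubits `q` satisfying `P`, identity elsewhere. -/
def hadOn (N : ℕ) (P : ℕ → Prop) [DecidablePred P] : QOp N :=
  Matrix.of fun x y =>
    ∏ k : Fin N, (if P ((k : ℕ) + 1) then HM (x k) (y k) else if x k = y k then (1 : ℂ) else 0)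

/-- The circuit `D_k` (1-based qubits, rightmost factor applied first):
`D_{2i} = (∏_{j=1}^{i−1} CZ_{2j,2j+1}) · (∏_{q=2}^{2i} H_q) · (∏_{j=1}^{i} CZ_{2j−1,2j})`,
`D_{2i+1} = (∏_{j=1}^{i} CZ_{2j,2j+1}) · (∏_{q=2}^{2i+1} H_q) · (∏_{j=1}^{i} CZ_{2j−1,2j})`. -/
def Dgate (N k : ℕ) : QOp N :=
  czLayer N (fun p => p % 2 = 0 ∧ 2 ≤ p ∧ p ≤ k - 1) *
    hadOn N (fun q => 2 ≤ q ∧ q ≤ k) *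
    czLayer N (fun p => p % 2 = 1 ∧ p ≤ k - 1)

/-- `U ⊗ I`: the operator acting as `U` on qubits `1,…,N` and identity on `A` ancilla qubits. -/
def embed (N A : ℕ) (U : QOp N) : QOp (N + A) :=
  Matrix.of fun x y =>
    U (fun i => x (Fin.castAdd A i)) (fun i => y (Fin.castAdd A i)) *
      (if ∀ i : Fin A, x (Fin.natAdd N i) = y (Fin.natAdd N i) then (1 : ℂ) else 0)

end

/-!
The ladder permutes the computational basis by a linear map `f` over the two-element field. The map
`f - 1` is nilpotent, so the order of `f` divides any power of two that is at least the number of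
qubits; if `r` is the least such power, a full period of the ladder costs depth `r`, and inverses of
the ladder are available. Conjugating the rotation `exp(θ Y_k)`, which is an `Ry` gate, by the ladder
or by its inverse gives rotations `exp(θ P)` about the local Pauli strings
`gA = Z_{k-2} Z_{k-1} Y_k X_{k+1}` and `gB = Z_{k-1} Y_k X_{k+1} X_{k+2}`, where qubits are counted
from the last one (`rot_gA`, `rot_gB`).

Signs of Pauli strings do not matter, so strings are vectors over the two-element field, with a
symplectic form that records commutation. Conjugating `exp(θ Q)` by a quarter turn `exp(π/4 P)` with
`P` and `Q` anticommuting gives the rotation about the product (`Rot.conj`); in particular `X` and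
`Z` can be exchanged on any qubit at no cost. Two steps of this kind lead from `gA`, `gB` to the
two-body strings `Y_i X_j` and `Z_i Y_j` for `j = i + 3`, and for `j = i + 2` away from the ends of
the register (`hop_three`, `hop_two`), each in five periods.

If `V` squares to `-1` and commutes with the commuting involutions `E` and `D`, then
`exp(π/4 · V (1 - E) (1 - D))` is the controlled gate of `E` and `D`, in which `V` no longer appears.
It is a product of four quarter turns (`Tgt.base`). With `V = Y_3` this yields a controlled `Z` on
the last two qubits, in 17 periods (`czt_base`). Quarter turns about the two-body strings transport
either end of this gate along hops of length `2` and `3`, at 20 periods per hop (`CZT.hop`), and a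
suitable path leads to any two of the first `N` qubits (`czt_ne`). A free exchange of `Z` and `X` on
one qubit turns the controlled `Z` into a CNOT (`reach_cnot`). The number of hops is at most
`(2 N + 14) / 3` and `r ≤ 2 N + 7`, which gives the bound on the depth of one CNOT (`cost_bound`);
`Ry` gates are absorbed in the rotation layers, and depths add under composition (`Reach.mul`).
-/

/-! ### Composition of ansatz circuits -/

/-- `U` is realised by an ansatz circuit of depth exactly `M` on `n` qubits. -/
def Reach (n M : ℕ) (U : QOp n) : Prop := ∃ α : ℕ → Fin n → ℝ, ansatzY n α M = U

lemma ansatzY_congr {n : ℕ} {α β : ℕ → Fin n → ℝ} {M : ℕ} (h : ∀ i ≤ M, α i = β i) :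
    ansatzY n α M = ansatzY n β M := by
  induction M with
  | zero => simp [ansatzY, h 0 le_rfl]
  | succ M ih =>
    simp only [ansatzY]
    rw [h (M + 1) le_rfl, ih fun i hi => h i (by omega)]

lemma reach_succ {n M : ℕ} {V : QOp n} (h : Reach n M V) (α : Fin n → ℝ) :
    Reach n (M + 1) (rotY α * ladderCNOT n * V) := by
  obtain ⟨β, rfl⟩ := h
  refine ⟨Function.update β (M + 1) α, ?_⟩
  simp only [ansatzY, Function.update_self]
  rw [ansatzY_congr (β := β)]
  intro i hi
  rw [Function.update_of_ne (by omega)]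

lemma zmod2_cases (a : ZMod 2) : a = 0 ∨ a = 1 := by revert a; decide

lemma RyM_mul (a b : ℝ) : RyM a * RyM b = RyM (a + b) := by
  have hc : Complex.cos ((a + b) / 2) = Complex.cos (a / 2) * Complex.cos (b / 2)
      - Complex.sin (a / 2) * Complex.sin (b / 2) := by rw [add_div, Complex.cos_add]
  have hs : Complex.sin ((a + b) / 2) = Complex.sin (a / 2) * Complex.cos (b / 2)
      + Complex.cos (a / 2) * Complex.sin (b / 2) := by rw [add_div, Complex.sin_add]
  ext i j
  have h2 : ∀ g : ZMod 2 → ℂ, ∑ x, g x = g 0 + g 1 := fun g => Fin.sum_univ_two g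
  rw [Matrix.mul_apply, h2]
  rcases zmod2_cases i with rfl | rfl <;> rcases zmod2_cases j with rfl | rfl <;>
    simp [RyM, hc, hs] <;> ring

lemma rotY_mul {n : ℕ} (α β : Fin n → ℝ) : rotY α * rotY β = rotY (α + β) := by
  ext x y
  simp only [rotY, Matrix.mul_apply, Matrix.of_apply, Pi.add_apply, ← RyM_mul]
  rw [Finset.prod_univ_sum, Fintype.piFinset_univ]
  refine Finset.sum_congr rfl fun z _ => ?_
  rw [Finset.prod_mul_distrib]

lemma reach_rot_mul {n M : ℕ} {V : QOp n} (h : Reach n M V) (α : Fin n → ℝ) :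
    Reach n M (rotY α * V) := by
  obtain ⟨β, rfl⟩ := h
  cases M with
  | zero => exact ⟨fun _ => α + β 0, by simp [ansatzY, rotY_mul]⟩
  | succ M =>
    simp only [ansatzY, ← mul_assoc, rotY_mul]
    exact reach_succ ⟨β, rfl⟩ _

/-- Depths add, since the two rotation layers meeting in the middle merge into one. -/
lemma Reach.mul {n M M' : ℕ} {U V : QOp n} (hU : Reach n M U) (hV : Reach n M' V) :
    Reach n (M + M') (U * V) := by
  obtain ⟨α, rfl⟩ := hU
  induction M with
  | zero => rw [Nat.zero_add]; exact reach_rot_mul hV _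
  | succ M ih =>
    rw [Nat.add_right_comm]
    simp only [ansatzY, mul_assoc]
    simpa only [mul_assoc] using reach_succ ih (α (M + 1))

lemma RyM_zero : RyM 0 = 1 := by
  ext i j
  rcases zmod2_cases i with rfl | rfl <;> rcases zmod2_cases j with rfl | rfl <;> simp [RyM]

lemma rotY_single {n : ℕ} (k : Fin n) (θ : ℝ) : rotY (Pi.single k θ) = gate1 (RyM θ) k := by
  ext x y
  simp only [rotY, gate1, Matrix.of_apply]
  rw [← Finset.mul_prod_erase _ _ (Finset.mem_univ k), Pi.single_eq_same]
  have h : ∏ j ∈ Finset.univ.erase k, RyM ((Pi.single k θ : Fin n → ℝ) j) (x j) (y j)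
      = ∏ j ∈ Finset.univ.erase k, if x j = y j then (1 : ℂ) else 0 := by
    refine Finset.prod_congr rfl fun j hj => ?_
    rw [Pi.single_eq_of_ne (Finset.ne_of_mem_erase hj), RyM_zero, Matrix.one_apply]
  rw [h]
  split_ifs with hxy
  · rw [Finset.prod_eq_one, mul_one]
    intro j hj
    rw [if_pos (hxy j (Finset.ne_of_mem_erase hj))]
  · push Not at hxy
    obtain ⟨j, hj, hne⟩ := hxy
    rw [Finset.prod_eq_zero (i := j) (by simp [hj]) (if_neg hne), mul_zero]

lemma reach_gate1 {n : ℕ} (k : Fin n) (θ : ℝ) : Reach n 0 (gate1 (RyM θ) k) :=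
  ⟨fun _ => Pi.single k θ, rotY_single k θ⟩

lemma rotY_zero {n : ℕ} : rotY (0 : Fin n → ℝ) = 1 := by
  ext x y
  simp only [rotY, Matrix.of_apply, Pi.zero_apply, RyM_zero, Matrix.one_apply]
  rw [Finset.prod_ite_zero]
  simp [funext_iff]

lemma reach_one {n : ℕ} : Reach n 0 (1 : QOp n) := ⟨fun _ => 0, rotY_zero⟩

lemma reach_ladder_pow {n : ℕ} (m : ℕ) : Reach n m (ladderCNOT n ^ m) := by
  induction m with
  | zero => simpa using reach_one
  | succ m ih => simpa [pow_succ', rotY_zero] using reach_succ ih 0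

/-! ### Pauli strings -/

/-- The character `a ↦ (-1)^a` of `ZMod 2`. -/
def chi (a : ZMod 2) : ℂ := if a = 0 then 1 else -1

lemma chi_add (a b : ZMod 2) : chi (a + b) = chi a * chi b := by
  rcases zmod2_cases a with rfl | rfl <;> rcases zmod2_cases b with rfl | rfl <;>
    simp [chi, show (1 : ZMod 2) + 1 = 0 by decide]

lemma chi_mul_self (a : ZMod 2) : chi a * chi a = 1 := by
  rcases zmod2_cases a with rfl | rfl <;> simp [chi]

lemma chi_zero : chi 0 = 1 := by simp [chi]

lemma chi_one : chi 1 = -1 := by simp [chi]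

/-- A Pauli string up to sign: the pair `(u, w)` stands for the operator `X^u Z^w`. -/
abbrev PVec (n : ℕ) := QState n × QState n

/-- The real Pauli string `X^u Z^w : |y⟩ ↦ (-1)^{w·y} |y + u⟩` for `p = (u, w)`. -/
def pauli {n : ℕ} (p : PVec n) : QOp n :=
  Matrix.of fun x y => if x = y + p.1 then chi (p.2 ⬝ᵥ y) else 0

/-- The bilinear form governing products of Pauli strings. Its value at `(p, p)` is the parity of
the number of `Y` factors of `p`, so `pauli p` squares to `-1` exactly when it is `1`. -/
def kap {n : ℕ} (p q : PVec n) : ZMod 2 := p.2 ⬝ᵥ q.1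

/-- The symplectic form: `0` when two Pauli strings commute, `1` when they anticommute. -/
def sym {n : ℕ} (p q : PVec n) : ZMod 2 := kap p q + kap q p

lemma pauli_mul {n : ℕ} (p q : PVec n) : pauli p * pauli q = chi (kap p q) • pauli (p + q) := by
  ext x y
  simp only [pauli, Matrix.mul_apply, Matrix.of_apply, Matrix.smul_apply, smul_eq_mul]
  rw [Finset.sum_eq_single (y + q.1)]
  · simp only [if_true, kap, Prod.fst_add, Prod.snd_add, dotProduct_add, add_dotProduct, chi_add,
      add_assoc, add_comm q.1 p.1]
    split_ifs <;> ring
  · intro z _ hz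
    simp [hz]
  · simp

lemma kap_add_left {n : ℕ} (p q s : PVec n) : kap (p + q) s = kap p s + kap q s := by
  simp [kap]

lemma kap_add_right {n : ℕ} (p q s : PVec n) : kap s (p + q) = kap s p + kap s q := by
  simp [kap]

lemma sym_add_left {n : ℕ} (p q s : PVec n) : sym (p + q) s = sym p s + sym q s := by
  simp only [sym, kap_add_left, kap_add_right]; ring

lemma sym_add_right {n : ℕ} (p q s : PVec n) : sym s (p + q) = sym s p + sym s q := by
  simp only [sym, kap_add_left, kap_add_right]; ring

lemma zmod2_add_self (a : ZMod 2) : a + a = 0 := by revert a; decide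

lemma pauli_zero {n : ℕ} : pauli (0 : PVec n) = 1 := by
  ext x y
  simp [pauli, Matrix.one_apply, chi]

lemma pvec_add_self {n : ℕ} (p : PVec n) : p + p = 0 := by
  ext i <;> simp [zmod2_add_self]

lemma pauli_sq {n : ℕ} (p : PVec n) : pauli p * pauli p = chi (kap p p) • 1 := by
  rw [pauli_mul, pvec_add_self, pauli_zero]

lemma pauli_swap {n : ℕ} (p q : PVec n) :
    pauli q * pauli p = chi (sym p q) • (pauli p * pauli q) := by
  rw [pauli_mul, pauli_mul, smul_smul, sym, chi_add, add_comm q p, mul_right_comm, chi_mul_self,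
    one_mul]

/-! ### The ladder as a linear map over the two-element field -/

/-- The basis vector of the qubit at distance `j` from the last one (so `j = 0` is the last qubit),
and `0` when `j` is not in `[0, n)`. Counting from the last qubit makes the parity of the ladder's
layers independent of `n`; the zero convention makes boundary terms vanish. -/
def dl (n : ℕ) (j : ℤ) : QState n := fun i => if (i : ℤ) + j = n - 1 then 1 else 0

lemma dl_dot_of_lt {n : ℕ} {j : ℤ} {i : ℕ} (hi : i < n) (h : (i : ℤ) + j = n - 1) (y : QState n) :
    dl n j ⬝ᵥ y = y ⟨i, hi⟩ := by
  rw [dotProduct, Finset.sum_eq_single ⟨i, hi⟩]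
  · simp [dl, h]
  · intro b _ hb
    have : (b : ℤ) + j ≠ n - 1 := fun hb' => hb (Fin.ext (by simp; omega))
    simp [dl, this]
  · simp

lemma dl_eq_zero {n : ℕ} {j : ℤ} (h : j < 0 ∨ (n : ℤ) ≤ j) : dl n j = 0 := by
  ext i
  have := i.2
  have : (i : ℤ) + j ≠ n - 1 := by omega
  simp [dl, this]

lemma dl_dot_dl {n : ℕ} (i j : ℤ) :
    dl n i ⬝ᵥ dl n j = if i = j ∧ 0 ≤ i ∧ i < n then 1 else 0 := by
  by_cases h : 0 ≤ i ∧ i < n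
  · obtain ⟨k, hk⟩ : ∃ k : ℕ, (k : ℤ) + i = n - 1 := ⟨(n - 1 - i).toNat, by omega⟩
    rw [dl_dot_of_lt (i := k) (by omega) hk]
    simp only [dl]
    split_ifs <;> first | rfl | omega
  · rw [dl_eq_zero (by omega), if_neg (by tauto)]
    simp

lemma qstate_ext {n : ℕ} {x y : QState n}
    (h : ∀ j : ℤ, 0 ≤ j → j < n → dl n j ⬝ᵥ x = dl n j ⬝ᵥ y) : x = y := by
  ext i
  have := h (n - 1 - i) (by omega) (by omega)
  rwa [dl_dot_of_lt i.2 (by omega), dl_dot_of_lt i.2 (by omega)] at this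

lemma bitAt_eq {n : ℕ} (y : QState n) {i : ℕ} {j : ℤ} (h : (i : ℤ) + j = n - 1) (hj : 0 ≤ j) :
    bitAt y i = dl n j ⬝ᵥ y := by
  rw [dl_dot_of_lt (i := i) (by omega) h, bitAt, dif_pos]

lemma dl_layer1 {n : ℕ} {j : ℤ} (hj : j < n) (y : QState n) :
    dl n j ⬝ᵥ layer1Map n y
      = if j % 2 = 1 then dl n j ⬝ᵥ y + dl n (j - 1) ⬝ᵥ y else dl n j ⬝ᵥ y := by
  by_cases h0 : j < 0
  · rw [dl_eq_zero (Or.inl h0), dl_eq_zero (j := j - 1) (by omega)]; simp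
  obtain ⟨i, hi⟩ : ∃ i : ℕ, (i : ℤ) + j = n - 1 := ⟨(n - 1 - j).toNat, by omega⟩
  rw [dl_dot_of_lt (i := i) (by omega) hi, dl_dot_of_lt (i := i) (by omega) hi]
  simp only [layer1Map]
  by_cases h1 : j % 2 = 1
  · rw [if_pos (by omega), if_pos h1, bitAt_eq y (j := j - 1) (by push_cast; omega) (by omega)]
  · rw [if_neg (by omega), if_neg h1]

lemma dl_layer2 {n : ℕ} {j : ℤ} (hj : j < n) (y : QState n) :
    dl n j ⬝ᵥ layer2Map n y
      = if j % 2 = 0 then dl n j ⬝ᵥ y + dl n (j - 1) ⬝ᵥ y else dl n j ⬝ᵥ y := by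
  by_cases h0 : j ≤ 0
  · rcases h0.eq_or_lt with rfl | h0
    · obtain ⟨i, hi⟩ : ∃ i : ℕ, (i : ℤ) + 0 = n - 1 := ⟨(n - 1), by omega⟩
      rw [dl_dot_of_lt (i := i) (by omega) hi, dl_dot_of_lt (i := i) (by omega) hi,
        dl_eq_zero (j := 0 - 1) (by omega)]
      simp only [layer2Map]
      rw [if_neg (by omega)]
      simp
    · rw [dl_eq_zero (Or.inl h0), dl_eq_zero (j := j - 1) (by omega)]; simp
  obtain ⟨i, hi⟩ : ∃ i : ℕ, (i : ℤ) + j = n - 1 := ⟨(n - 1 - j).toNat, by omega⟩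
  rw [dl_dot_of_lt (i := i) (by omega) hi, dl_dot_of_lt (i := i) (by omega) hi]
  simp only [layer2Map]
  by_cases h1 : j % 2 = 0
  · rw [if_pos (by omega), if_pos h1, bitAt_eq y (j := j - 1) (by push_cast; omega) (by omega)]
  · rw [if_neg (by omega), if_neg h1]

/-- The bit-string permutation of the ladder. -/
def ladderMap (n : ℕ) (y : QState n) : QState n := layer2Map n (layer1Map n y)

lemma dl_ladder_odd {n : ℕ} {j : ℤ} (hj : j < n) (h : j % 2 = 1) (y : QState n) :
    dl n j ⬝ᵥ ladderMap n y = dl n j ⬝ᵥ y + dl n (j - 1) ⬝ᵥ y := by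
  rw [ladderMap, dl_layer2 hj, if_neg (by omega), dl_layer1 hj, if_pos h]

lemma dl_ladder_even {n : ℕ} {j : ℤ} (hj : j < n) (h : j % 2 = 0) (y : QState n) :
    dl n j ⬝ᵥ ladderMap n y = dl n j ⬝ᵥ y + dl n (j - 1) ⬝ᵥ y + dl n (j - 2) ⬝ᵥ y := by
  rw [ladderMap, dl_layer2 hj, if_pos h, dl_layer1 hj, if_neg (by omega),
    dl_layer1 (by omega), if_pos (by omega), show j - 1 - 1 = j - 2 by ring, add_assoc]

/-- The ladder as a linear endomorphism. -/
def ladderLin (n : ℕ) : Module.End (ZMod 2) (QState n) where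
  toFun := ladderMap n
  map_add' x y := by
    refine qstate_ext fun j _ hj => ?_
    rcases Int.emod_two_eq_zero_or_one j with h | h
    · simp only [dotProduct_add, dl_ladder_even hj h]; ring
    · simp only [dotProduct_add, dl_ladder_odd hj h]; ring
  map_smul' c x := by
    refine qstate_ext fun j _ hj => ?_
    rcases Int.emod_two_eq_zero_or_one j with h | h
    · simp only [dotProduct_smul, dl_ladder_even hj h, smul_eq_mul, RingHom.id_apply]; ring
    · simp only [dotProduct_smul, dl_ladder_odd hj h, smul_eq_mul, RingHom.id_apply]; ring

lemma ladderLin_apply {n : ℕ} (y : QState n) : ladderLin n y = ladderMap n y := rfl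

/-- `ladderLin n - 1` moves coordinates strictly away from the last qubit, hence is nilpotent. -/
lemma ladder_sub_one_pow {n : ℕ} (m : ℕ) (y : QState n) (j : ℤ) (hj : j < m) :
    dl n j ⬝ᵥ ((ladderLin n - 1) ^ m) y = 0 := by
  induction m generalizing j with
  | zero => rw [dl_eq_zero (Or.inl (by simpa using hj))]; simp
  | succ m ih =>
    by_cases hn : (n : ℤ) ≤ j
    · rw [dl_eq_zero (Or.inr hn)]; simp
    push Not at hn
    rw [pow_succ', Module.End.mul_apply]
    set w := ((ladderLin n - 1) ^ m) y
    rw [LinearMap.sub_apply, Module.End.one_apply, ladderLin_apply, dotProduct_sub]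
    rcases Int.emod_two_eq_zero_or_one j with h | h
    · rw [dl_ladder_even hn h, ih (j - 1) (by omega), ih (j - 2) (by omega)]; ring
    · rw [dl_ladder_odd hn h, ih (j - 1) (by omega)]; ring

lemma ladderLin_pow {n : ℕ} (a : ℕ) (h : n ≤ 2 ^ a) : ladderLin n ^ (2 ^ a) = 1 := by
  -- Squaring is additive on commuting operators in characteristic two.
  have key : ∀ a : ℕ, ladderLin n ^ (2 ^ a) = 1 + (ladderLin n - 1) ^ (2 ^ a) := by
    intro a
    induction a with
    | zero => simp
    | succ a ih =>
      rw [pow_succ, pow_mul, ih, pow_mul]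
      set B := (ladderLin n - 1) ^ (2 ^ a)
      have hB : B + B = 0 := by
        ext x
        simp [zmod2_add_self]
      calc (1 + B) ^ 2 = 1 + (B + B) + B ^ 2 := by noncomm_ring
        _ = _ := by rw [hB, add_zero]
  rw [key]
  have : (ladderLin n - 1) ^ (2 ^ a) = 0 := by
    refine LinearMap.ext fun y => qstate_ext fun j _ hj => ?_
    rw [ladder_sub_one_pow (2 ^ a) y j (by push_cast; exact_mod_cast hj.trans_le (by exact_mod_cast h))]
    simp
  rw [this, add_zero]

lemma ladderCNOT_pow_eq {n : ℕ} (m : ℕ) :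
    ladderCNOT n ^ m = Matrix.of fun x y => if x = (ladderLin n ^ m) y then (1 : ℂ) else 0 := by
  induction m with
  | zero => ext x y; simp [Matrix.one_apply]
  | succ m ih =>
    ext x y
    rw [pow_succ', ih, Matrix.mul_apply, Finset.sum_eq_single ((ladderLin n ^ m) y)]
    · simp only [ladderCNOT, Matrix.of_apply, pow_succ', Module.End.mul_apply, ladderLin_apply,
        ladderMap, if_true, mul_one]
    · intro z _ hz
      simp [hz]
    · simp

lemma ladderCNOT_pow {n : ℕ} (a : ℕ) (h : n ≤ 2 ^ a) : ladderCNOT n ^ (2 ^ a) = 1 := by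
  rw [ladderCNOT_pow_eq, ladderLin_pow a h]
  ext x y
  simp [Matrix.one_apply]

/-- Intertwining of Pauli strings by the ladder. -/
lemma ladder_mul_pauli {n : ℕ} {p q : PVec n} (h1 : ladderMap n p.1 = q.1)
    (h2 : ∀ y, q.2 ⬝ᵥ ladderMap n y = p.2 ⬝ᵥ y) :
    ladderCNOT n * pauli p = pauli q * ladderCNOT n := by
  ext x y
  rw [Matrix.mul_apply, Matrix.mul_apply, Finset.sum_eq_single (y + p.1),
    Finset.sum_eq_single (ladderMap n y)]
  · have : ladderMap n (y + p.1) = ladderMap n y + q.1 := by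
      rw [← h1]; exact (ladderLin n).map_add y p.1
    simp only [ladderMap] at this h2
    simp [ladderCNOT, pauli, ladderMap, this, h2]
  · intro z _ hz
    simp only [ladderMap] at hz
    simp [ladderCNOT, hz]
  · simp
  · intro z _ hz
    simp [pauli, hz]
  · simp

/-! ### Pauli rotations and controlled gates -/

/-- `X` on the qubit at distance `j` from the last one. -/
def px (n : ℕ) (j : ℤ) : PVec n := (dl n j, 0)

/-- `Z` on the qubit at distance `j` from the last one. -/
def pz (n : ℕ) (j : ℤ) : PVec n := (0, dl n j)

/-- `Y` (up to a phase) on the qubit at distance `j` from the last one. -/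
def py (n : ℕ) (j : ℤ) : PVec n := px n j + pz n j

/-- The Pauli rotation `exp(θ P)` for a Pauli string `P` with `P² = -1`. -/
noncomputable def rotP {n : ℕ} (θ : ℝ) (p : PVec n) : QOp n :=
  (Real.cos θ : ℂ) • 1 + (Real.sin θ : ℂ) • pauli p

/-- All rotations about `p` (a string with an odd number of `Y`s) are realised in depth `c * r`,
that is, in `c` full periods of the ladder when `r` is its period. -/
def Rot (n r c : ℕ) (p : PVec n) : Prop :=
  kap p p = 1 ∧ ∀ θ : ℝ, Reach n (c * r) (rotP θ p)

/-- For commuting involutions `E`, `D`: the gate that is `-1` where `E = D = -1`, and `1` on the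
other joint eigenspaces. With `E = Z` on one qubit and `D = X` on another it is a CNOT. -/
noncomputable def ctl {n : ℕ} (E D : QOp n) : QOp n := (1 / 2 : ℂ) • (1 + E + D - E * D)

/-- The controlled gates of `± p` and `± q` are realised in depth `c * r`, for all four choices of
signs. -/
def Tgt (n r c : ℕ) (p q : PVec n) : Prop :=
  ∀ ε δ : ℂ, (ε = 1 ∨ ε = -1) → (δ = 1 ∨ δ = -1) →
    Reach n (c * r) (ctl (ε • pauli p) (δ • pauli q))

lemma rotP_quarter {n : ℕ} (p : PVec n) :
    rotP (Real.pi / 4) p = ((Real.sqrt 2 / 2 : ℝ) : ℂ) • (1 + pauli p) := by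
  rw [rotP, Real.cos_pi_div_four, Real.sin_pi_div_four, smul_add]

lemma rotP_neg_quarter {n : ℕ} (p : PVec n) :
    rotP (-(Real.pi / 4)) p = ((Real.sqrt 2 / 2 : ℝ) : ℂ) • (1 - pauli p) := by
  rw [rotP, Real.cos_neg, Real.sin_neg, Real.cos_pi_div_four, Real.sin_pi_div_four, smul_sub,
    Complex.ofReal_neg, neg_smul, sub_eq_add_neg]

lemma half_sq : ((Real.sqrt 2 / 2 : ℝ) : ℂ) * ((Real.sqrt 2 / 2 : ℝ) : ℂ) = 1 / 2 := by
  rw [← Complex.ofReal_mul, show Real.sqrt 2 / 2 * (Real.sqrt 2 / 2) = 1 / 2 by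
    rw [div_mul_div_comm, Real.mul_self_sqrt (by norm_num)]; norm_num]
  norm_num

lemma pauli_sq_neg {n : ℕ} {p : PVec n} (h : kap p p = 1) : pauli p * pauli p = -1 := by
  rw [pauli_sq, h, chi_one, neg_smul, one_smul]

lemma pauli_anti {n : ℕ} {p q : PVec n} (h : sym p q = 1) :
    pauli q * pauli p = -(pauli p * pauli q) := by
  rw [pauli_swap, h, chi_one, neg_smul, one_smul]

lemma pauli_comm {n : ℕ} {p q : PVec n} (h : sym p q = 0) :
    pauli q * pauli p = pauli p * pauli q := by
  rw [pauli_swap, h, chi_zero, one_smul]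

lemma conj_quarter {n : ℕ} (p : PVec n) (Q : QOp n) :
    rotP (Real.pi / 4) p * Q * rotP (-(Real.pi / 4)) p
      = (1 / 2 : ℂ) • ((1 + pauli p) * Q * (1 - pauli p)) := by
  rw [rotP_quarter, rotP_neg_quarter, smul_mul_assoc, smul_mul_assoc, mul_smul_comm, smul_smul,
    half_sq]

lemma half_add_self {n : ℕ} (A : QOp n) : (1 / 2 : ℂ) • (A + A) = A := by
  rw [← two_smul ℂ A, smul_smul]; norm_num

lemma conj_comm {n : ℕ} {p : PVec n} {Q : QOp n} (hp : kap p p = 1)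
    (h : Q * pauli p = pauli p * Q) :
    rotP (Real.pi / 4) p * Q * rotP (-(Real.pi / 4)) p = Q := by
  have h2 : pauli p * Q * pauli p = -Q := by
    rw [mul_assoc, h, ← mul_assoc, pauli_sq_neg hp, neg_one_mul]
  rw [conj_quarter, show (1 + pauli p) * Q * (1 - pauli p)
    = Q - Q * pauli p + pauli p * Q - pauli p * Q * pauli p by noncomm_ring, h2, h]
  rw [show Q - pauli p * Q + pauli p * Q - -Q = Q + Q by abel, half_add_self]

lemma conj_anti {n : ℕ} {p q : PVec n} (hp : kap p p = 1) (h : sym p q = 1) :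
    rotP (Real.pi / 4) p * pauli q * rotP (-(Real.pi / 4)) p
      = chi (kap p q) • pauli (p + q) := by
  have h1 := pauli_anti h
  have h2 : pauli p * pauli q * pauli p = pauli q := by
    rw [mul_assoc, h1, mul_neg, ← mul_assoc, pauli_sq_neg hp, neg_one_mul, neg_neg]
  rw [← pauli_mul, conj_quarter, show (1 + pauli p) * pauli q * (1 - pauli p)
    = pauli q - pauli q * pauli p + pauli p * pauli q - pauli p * pauli q * pauli p by
      noncomm_ring, h2, h1]
  rw [show pauli q - -(pauli p * pauli q) + pauli p * pauli q - pauli q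
    = pauli p * pauli q + pauli p * pauli q by abel, half_add_self]

lemma conj_one {n : ℕ} {p : PVec n} (hp : kap p p = 1) :
    rotP (Real.pi / 4) p * rotP (-(Real.pi / 4)) p = 1 := by
  simpa using conj_comm (Q := 1) hp (by simp)

lemma conj_one' {n : ℕ} {p : PVec n} (hp : kap p p = 1) :
    rotP (-(Real.pi / 4)) p * rotP (Real.pi / 4) p = 1 :=
  mul_eq_one_comm.mp (conj_one hp)

lemma chi_sign (a : ZMod 2) : chi a = 1 ∨ chi a = -1 := by
  rcases zmod2_cases a with rfl | rfl <;> simp [chi]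

/-- Conjugating one Pauli rotation by a quarter turn about an anticommuting string gives the
rotation about the product. -/
lemma Rot.conj {n r c c' : ℕ} {p q s : PVec n} (hp : Rot n r c p) (hq : Rot n r c' q)
    (h : sym p q = 1) (hs : s = p + q) : Rot n r (2 * c + c') s := by
  subst hs
  refine ⟨?_, fun θ => ?_⟩
  · have : kap (p + q) (p + q) = kap p p + kap q q + sym p q := by
      simp only [kap_add_left, kap_add_right, sym]; ring
    rw [this, hp.1, hq.1, h]; decide
  · have key : ∀ θ' : ℝ, rotP (Real.pi / 4) p * rotP θ' q * rotP (-(Real.pi / 4)) p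
        = (Real.cos θ' : ℂ) • 1 + (Real.sin θ' * chi (kap p q) : ℂ) • pauli (p + q) := by
      intro θ'
      rw [rotP.eq_1 θ' q, mul_add, add_mul, mul_smul_comm, mul_smul_comm, mul_one, smul_mul_assoc,
        smul_mul_assoc, conj_one hp.1, conj_anti hp.1 h, smul_smul]
    have hr : ∀ θ' : ℝ, Reach n ((2 * c + c') * r)
        (rotP (Real.pi / 4) p * rotP θ' q * rotP (-(Real.pi / 4)) p) := by
      intro θ'
      have := ((hp.2 (Real.pi / 4)).mul (hq.2 θ')).mul (hp.2 (-(Real.pi / 4)))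
      rwa [show c * r + c' * r + c * r = (2 * c + c') * r by ring] at this
    rcases chi_sign (kap p q) with hc | hc
    · have := hr θ
      rw [key, hc, mul_one] at this
      exact this
    · have := hr (-θ)
      rw [key, hc, Real.cos_neg, Real.sin_neg] at this
      simpa [rotP] using this

lemma conj_ctl {n : ℕ} {p : PVec n} (hp : kap p p = 1) (E D : QOp n) :
    rotP (Real.pi / 4) p * ctl E D * rotP (-(Real.pi / 4)) p
      = ctl (rotP (Real.pi / 4) p * E * rotP (-(Real.pi / 4)) p)
        (rotP (Real.pi / 4) p * D * rotP (-(Real.pi / 4)) p) := by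
  have h1 := conj_one hp
  have h2 := conj_one' hp
  generalize rotP (Real.pi / 4) p = R at *
  generalize rotP (-(Real.pi / 4)) p = S at *
  have h3 : R * E * S * (R * D * S) = R * (E * D) * S := by
    rw [show R * E * S * (R * D * S) = R * E * (S * R) * D * S by noncomm_ring, h2]
    noncomm_ring
  simp only [ctl]
  rw [h3, mul_smul_comm, smul_mul_assoc, mul_sub, mul_add, mul_add, sub_mul, add_mul, add_mul,
    mul_one, h1]

lemma sign_mul_chi {ε : ℂ} (h : ε = 1 ∨ ε = -1) (a : ZMod 2) : ε * chi a = 1 ∨ ε * chi a = -1 := by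
  rcases h with rfl | rfl <;> rcases chi_sign a with h | h <;> simp [h]

/-- A quarter turn about a string anticommuting with the first string of a controlled gate and
commuting with the second replaces the first by the product. -/
lemma Tgt.conj {n r c c' : ℕ} {o p q s : PVec n} (ho : Rot n r c o) (h : Tgt n r c' p q)
    (h1 : sym o p = 1) (h0 : sym o q = 0) (hs : s = o + p) : Tgt n r (2 * c + c') s q := by
  subst hs
  intro ε δ hε hδ
  have := ((ho.2 (Real.pi / 4)).mul (h (ε * chi (kap o p)) δ (sign_mul_chi hε _) hδ)).mul
    (ho.2 (-(Real.pi / 4)))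
  rw [show c * r + c' * r + c * r = (2 * c + c') * r by ring, conj_ctl ho.1] at this
  simp only [mul_smul_comm, smul_mul_assoc] at this
  rw [conj_anti ho.1 h1, conj_comm ho.1 (pauli_comm h0), smul_smul, mul_assoc, chi_mul_self,
    mul_one] at this
  exact this

lemma Tgt.symm {n r c : ℕ} {p q : PVec n} (h : Tgt n r c p q) (h0 : sym p q = 0) :
    Tgt n r c q p := by
  intro ε δ hε hδ
  have := h δ ε hδ hε
  have e : ctl (ε • pauli q) (δ • pauli p) = ctl (δ • pauli p) (ε • pauli q) := by
    simp only [ctl, smul_mul_smul_comm, pauli_comm h0]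
    rw [mul_comm ε δ, add_right_comm]
  rwa [e]

/-- Up to the normalisation `1/4`, the left side is `exp(π/4 · V (1 - E) (1 - D))`, the product of
quarter turns about `V`, `V E`, `V D`, `V E D`: it is `exp(π V) = -1` where `E = D = -1` and `1`
elsewhere, that is, the controlled gate of `E` and `D`. -/
lemma ctl_expand {n : ℕ} {V E D : QOp n} (hV : V * V = -1) (hE : E * E = 1) (hD : D * D = 1)
    (hEV : E * V = V * E) (hDV : D * V = V * D) (hDE : D * E = E * D) :
    (1 + V) * (1 - V * E) * (1 - V * D) * (1 + V * E * D) = (2 : ℂ) • (1 + E + D - E * D) := by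
  have a1 : ∀ X, V * (V * X) = -X := fun X => by rw [← mul_assoc, hV, neg_one_mul]
  have a2 : ∀ X, E * (E * X) = X := fun X => by rw [← mul_assoc, hE, one_mul]
  have a4 : ∀ X, E * (V * X) = V * (E * X) := fun X => by rw [← mul_assoc, hEV, mul_assoc]
  have a5 : ∀ X, D * (V * X) = V * (D * X) := fun X => by rw [← mul_assoc, hDV, mul_assoc]
  have a6 : ∀ X, D * (E * X) = E * (D * X) := fun X => by rw [← mul_assoc, hDE, mul_assoc]
  rw [two_smul]
  simp only [mul_add, add_mul, mul_sub, sub_mul, one_mul, mul_one, mul_assoc, hV, hE, hD,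
    a1, a2, a4, a5, a6, neg_mul]
  abel

lemma Rot.quarter {n r c : ℕ} {p : PVec n} (h : Rot n r c p) {ε : ℂ} (hε : ε = 1 ∨ ε = -1) :
    Reach n (c * r) (((Real.sqrt 2 / 2 : ℝ) : ℂ) • (1 + ε • pauli p)) := by
  rcases hε with rfl | rfl
  · have := h.2 (Real.pi / 4)
    rw [rotP_quarter] at this
    simpa using this
  · have := h.2 (-(Real.pi / 4))
    rw [rotP_neg_quarter] at this
    simpa [sub_eq_add_neg] using this

/-- A controlled gate from the four rotations of `ctl_expand`; the string `v` disappears from the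
result. -/
lemma Tgt.base {n r a b c d : ℕ} {v p q : PVec n} (hv : Rot n r a v) (hp : Rot n r b (v + p))
    (hq : Rot n r c (v + q)) (hpq : Rot n r d (v + p + q)) (kp : kap p p = 0) (kq : kap q q = 0)
    (svp : sym v p = 0) (svq : sym v q = 0) (spq : sym p q = 0) :
    Tgt n r (a + b + c + d) p q := by
  intro ε δ hε hδ
  have e2 : ε * ε = 1 := by rcases hε with rfl | rfl <;> norm_num
  have d2 : δ * δ = 1 := by rcases hδ with rfl | rfl <;> norm_num
  have ed : ε * δ = 1 ∨ ε * δ = -1 := by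
    rcases hε with rfl | rfl <;> rcases hδ with rfl | rfl <;> norm_num
  have neg : ∀ {x : ℂ}, (x = 1 ∨ x = -1) → (-x = 1 ∨ -x = -1) := by
    rintro x (rfl | rfl) <;> norm_num
  have H := (((hv.quarter (Or.inl rfl)).mul (hp.quarter (sign_mul_chi (neg hε) (kap v p)))).mul
    (hq.quarter (sign_mul_chi (neg hδ) (kap v q)))).mul
    (hpq.quarter (sign_mul_chi (sign_mul_chi ed (kap v p)) (kap (v + p) q)))
  rw [show a * r + b * r + c * r + d * r = (a + b + c + d) * r by ring] at H
  convert H using 1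
  set h : ℂ := ((Real.sqrt 2 / 2 : ℝ) : ℂ)
  simp only [smul_mul_smul_comm]
  rw [show h * h * h * h = (h * h) * (h * h) by ring, half_sq]
  set V := pauli v
  set E := ε • pauli p
  set D := δ • pauli q
  have w1 : (-ε * chi (kap v p)) • pauli (v + p) = -(V * E) := by
    simp only [V, E, mul_smul_comm, pauli_mul, smul_smul, ← neg_smul, neg_mul]
  have w2 : (-δ * chi (kap v q)) • pauli (v + q) = -(V * D) := by
    simp only [V, D, mul_smul_comm, pauli_mul, smul_smul, ← neg_smul, neg_mul]
  have w3 : (ε * δ * chi (kap v p) * chi (kap (v + p) q)) • pauli (v + p + q) = V * E * D := by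
    simp only [V, E, D, mul_smul_comm, smul_mul_assoc, pauli_mul, smul_smul]
    congr 1; ring
  rw [w1, w2, w3, one_smul, ← sub_eq_add_neg, ← sub_eq_add_neg, ctl_expand, smul_smul, ctl]
  · norm_num
  · exact pauli_sq_neg hv.1
  · simp only [E, smul_mul_smul_comm, e2, one_smul, pauli_sq, kp, chi_zero]
  · simp only [D, smul_mul_smul_comm, d2, one_smul, pauli_sq, kq, chi_zero]
  · simp only [E, V, smul_mul_assoc, mul_smul_comm, pauli_comm svp]
  · simp only [D, V, smul_mul_assoc, mul_smul_comm, pauli_comm svq]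
  · simp only [E, D, smul_mul_smul_comm, pauli_comm spq, mul_comm]

/-! ### Generators -/

lemma sym_xx {n : ℕ} (i j : ℤ) : sym (px n i) (px n j) = 0 := by simp [sym, kap, px]

lemma sym_zz {n : ℕ} (i j : ℤ) : sym (pz n i) (pz n j) = 0 := by simp [sym, kap, pz]

lemma sym_xz {n : ℕ} (i j : ℤ) :
    sym (px n i) (pz n j) = if i = j ∧ 0 ≤ i ∧ i < n then 1 else 0 := by
  have := dl_dot_dl (n := n) i j
  rw [dotProduct_comm] at this
  simp [sym, kap, px, pz, this]

lemma sym_swap {n : ℕ} (p q : PVec n) : sym p q = sym q p := add_comm _ _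

lemma sym_xz_eq {n : ℕ} {i j : ℤ} (h : i = j) (h0 : 0 ≤ i) (h1 : i < n) :
    sym (px n i) (pz n j) = 1 := by rw [sym_xz, if_pos ⟨h, h0, h1⟩]

lemma sym_zx_eq {n : ℕ} {i j : ℤ} (h : i = j) (h0 : 0 ≤ i) (h1 : i < n) :
    sym (pz n i) (px n j) = 1 := by rw [sym_swap, sym_xz_eq h.symm (h ▸ h0) (h ▸ h1)]

lemma sym_xz_ne {n : ℕ} {i j : ℤ} (h : i ≠ j) : sym (px n i) (pz n j) = 0 := by
  rw [sym_xz, if_neg (by tauto)]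

lemma sym_zx_ne {n : ℕ} {i j : ℤ} (h : i ≠ j) : sym (pz n i) (px n j) = 0 := by
  rw [sym_swap, sym_xz_ne h.symm]

lemma pvec_two {n : ℕ} : (2 : PVec n) = 0 := by
  rw [← one_add_one_eq_two, pvec_add_self]

lemma kap_x {n : ℕ} (i : ℤ) (p : PVec n) : kap (px n i) p = 0 := by simp [kap, px]

lemma kap_zz {n : ℕ} (i j : ℤ) : kap (pz n i) (pz n j) = 0 := by simp [kap, pz]

lemma kap_zx_eq {n : ℕ} {i j : ℤ} (h : i = j) (h0 : 0 ≤ i) (h1 : i < n) :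
    kap (pz n i) (px n j) = 1 := by
  subst h
  simpa [kap, px, pz, h0, h1] using dl_dot_dl (n := n) i i

lemma kap_zx_ne {n : ℕ} {i j : ℤ} (h : i ≠ j) : kap (pz n i) (px n j) = 0 := by
  simpa [kap, px, pz, h] using dl_dot_dl (n := n) i j

lemma py_fst {n : ℕ} (k : ℤ) : (py n k).1 = dl n k := by simp [py, px, pz]

lemma py_snd {n : ℕ} (k : ℤ) : (py n k).2 = dl n k := by simp [py, px, pz]

/-- A `Y` rotation is an `Ry` gate, and costs no ladder. -/
lemma rot_y {n r : ℕ} {k : ℤ} (h0 : 0 ≤ k) (h1 : k < n) : Rot n r 0 (py n k) := by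
  refine ⟨?_, fun θ => ?_⟩
  · simp (disch := omega) only [py, kap_add_left, kap_add_right, kap_x, kap_zz, kap_zx_eq]
    decide
  · obtain ⟨i, hi⟩ : ∃ i : Fin n, (i : ℤ) + k = n - 1 :=
      ⟨⟨(n - 1 - k).toNat, by omega⟩, by simp; omega⟩
    have : gate1 (RyM (2 * θ)) i = rotP θ (py n k) := by
      have hd : ∀ j : Fin n, j ≠ i → dl n k j = 0 := fun j hj =>
        if_neg fun h => hj (Fin.ext (by omega))
      have hdi : dl n k i = 1 := if_pos hi
      ext x y
      simp only [gate1, rotP, pauli, py_fst, py_snd, dl_dot_of_lt i.2 hi, Matrix.of_apply,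
        Matrix.add_apply, Matrix.smul_apply, Matrix.one_apply, smul_eq_mul]
      by_cases hxy : ∀ j, j ≠ i → x j = y j
      · rw [if_pos hxy]
        have e1 : x = y ↔ x i = y i := by
          refine ⟨fun h => by rw [h], fun h => funext fun j => ?_⟩
          by_cases hj : j = i
          · rw [hj, h]
          · exact hxy j hj
        have e2 : x = y + dl n k ↔ x i = y i + 1 := by
          refine ⟨fun h => by rw [h]; simp [hdi], fun h => funext fun j => ?_⟩
          by_cases hj : j = i
          · rw [hj, h]; simp [hdi]
          · simp [hxy j hj, hd j hj]
        simp only [e1, e2]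
        rcases zmod2_cases (x i) with hx | hx <;> rcases zmod2_cases (y i) with hy | hy <;>
          simp [hx, hy, RyM, chi, show (1 : ZMod 2) + 1 = 0 from rfl]
      · rw [if_neg hxy, if_neg, if_neg]
        · simp
        · rintro rfl
          exact hxy fun j hj => by simp [hd j hj]
        · rintro rfl
          exact hxy fun j hj => rfl
    rw [← this, zero_mul]
    exact reach_gate1 i _

/-- One of the two strings obtained from `Y` on qubit `k` by conjugation with the ladder or with
its inverse; the parity of `k` decides which of `gA`, `gB` belongs to the inverse. Factors on
qubits outside the register are trivial. -/
def gA (n : ℕ) (k : ℤ) : PVec n := pz n (k - 2) + pz n (k - 1) + py n k + px n (k + 1)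

/-- The other conjugate of `Y` on qubit `k`; see `gA`. -/
def gB (n : ℕ) (k : ℤ) : PVec n := pz n (k - 1) + py n k + px n (k + 1) + px n (k + 2)

/-- Conjugation of a free rotation by the ladder: the inverse ladder is its power `r - 1`. -/
lemma Rot.ladder {n r : ℕ} {p q : PVec n} (hr : ladderCNOT n ^ r = 1) (hr1 : 1 ≤ r)
    (hp : Rot n r 0 p) (h : ladderCNOT n * pauli p = pauli q * ladderCNOT n)
    (hq : kap q q = 1) : Rot n r 1 q := by
  refine ⟨hq, fun θ => ?_⟩
  obtain ⟨m, rfl⟩ : ∃ m, r = m + 1 := ⟨r - 1, by omega⟩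
  have h1 := ((reach_ladder_pow 1).mul (hp.2 θ)).mul (reach_ladder_pow (n := n) m)
  have h2 : ladderCNOT n ^ 1 * rotP θ p * ladderCNOT n ^ m = rotP θ q := by
    rw [pow_one]
    have : ladderCNOT n * rotP θ p = rotP θ q * ladderCNOT n := by
      simp only [rotP, mul_add, add_mul, mul_smul_comm, smul_mul_assoc, h, mul_one, one_mul]
    rw [this, mul_assoc, ← pow_succ', hr, mul_one]
  rw [h2] at h1
  convert h1 using 1
  ring

lemma Rot.ladder' {n r : ℕ} {p q : PVec n} (hr : ladderCNOT n ^ r = 1) (hr1 : 1 ≤ r)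
    (hp : Rot n r 0 p) (h : ladderCNOT n * pauli q = pauli p * ladderCNOT n)
    (hq : kap q q = 1) : Rot n r 1 q := by
  refine ⟨hq, fun θ => ?_⟩
  obtain ⟨m, rfl⟩ : ∃ m, r = m + 1 := ⟨r - 1, by omega⟩
  have h1 := ((reach_ladder_pow (n := n) m).mul (hp.2 θ)).mul (reach_ladder_pow 1)
  have h2 : ladderCNOT n ^ m * rotP θ p * ladderCNOT n ^ 1 = rotP θ q := by
    rw [pow_one]
    have : rotP θ p * ladderCNOT n = ladderCNOT n * rotP θ q := by
      simp only [rotP, mul_add, add_mul, mul_smul_comm, smul_mul_assoc, h, mul_one, one_mul]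
    rw [mul_assoc, this, ← mul_assoc, ← pow_succ, hr, one_mul]
  rw [h2] at h1
  convert h1 using 1
  ring

lemma gA_fst {n : ℕ} (k : ℤ) : (gA n k).1 = dl n k + dl n (k + 1) := by simp [gA, py, px, pz]

lemma gA_snd {n : ℕ} (k : ℤ) : (gA n k).2 = dl n (k - 2) + dl n (k - 1) + dl n k := by
  simp [gA, py, px, pz]

lemma gB_fst {n : ℕ} (k : ℤ) : (gB n k).1 = dl n k + dl n (k + 1) + dl n (k + 2) := by
  simp [gB, py, px, pz]

lemma gB_snd {n : ℕ} (k : ℤ) : (gB n k).2 = dl n (k - 1) + dl n k := by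
  simp [gB, py, px, pz]

lemma ladder_dl_odd {n : ℕ} {k : ℤ} (h0 : 0 ≤ k) (h : k % 2 = 1) :
    ladderMap n (dl n k) = dl n k + dl n (k + 1) := by
  refine qstate_ext fun j hj0 hj => ?_
  rcases Int.emod_two_eq_zero_or_one j with hj2 | hj2
  · simp only [dl_ladder_even hj hj2, dotProduct_add, dl_dot_dl]
    split_ifs <;> first | omega | rfl
  · simp only [dl_ladder_odd hj hj2, dotProduct_add, dl_dot_dl]
    split_ifs <;> first | omega | rfl

lemma ladder_dl_even {n : ℕ} {k : ℤ} (h0 : 0 ≤ k) (h : k % 2 = 0) :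
    ladderMap n (dl n k) = dl n k + dl n (k + 1) + dl n (k + 2) := by
  refine qstate_ext fun j hj0 hj => ?_
  rcases Int.emod_two_eq_zero_or_one j with hj2 | hj2
  · simp only [dl_ladder_even hj hj2, dotProduct_add, dl_dot_dl]
    split_ifs <;> first | omega | rfl
  · simp only [dl_ladder_odd hj hj2, dotProduct_add, dl_dot_dl]
    split_ifs <;> first | omega | rfl

lemma ladder_add {n : ℕ} (x y : QState n) : ladderMap n (x + y) = ladderMap n x + ladderMap n y :=
  (ladderLin n).map_add x y

lemma kap_gA {n : ℕ} {k : ℤ} (h0 : 0 ≤ k) (h1 : k < n) : kap (gA n k) (gA n k) = 1 := by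
  simp only [kap, gA_fst, gA_snd, dotProduct_add, add_dotProduct, dl_dot_dl, true_and]
  split_ifs <;> first | omega | rfl

lemma kap_gB {n : ℕ} {k : ℤ} (h0 : 0 ≤ k) (h1 : k < n) : kap (gB n k) (gB n k) = 1 := by
  simp only [kap, gB_fst, gB_snd, dotProduct_add, add_dotProduct, dl_dot_dl, true_and]
  split_ifs <;> first | omega | rfl

lemma rot_gA {n r : ℕ} (hr : ladderCNOT n ^ r = 1) (hr1 : 1 ≤ r) {k : ℤ} (h0 : 0 ≤ k)
    (h1 : k < n) : Rot n r 1 (gA n k) := by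
  rcases Int.emod_two_eq_zero_or_one k with h | h
  · refine Rot.ladder' hr hr1 (rot_y h0 h1) (ladder_mul_pauli ?_ fun y => ?_) (kap_gA h0 h1)
    · rw [gA_fst, py_fst, ladder_add, ladder_dl_even h0 h, ladder_dl_odd (by omega) (by omega)]
      ext i
      have := zmod2_add_self (dl n (k + 1) i)
      have := zmod2_add_self (dl n (k + 2) i)
      simp only [Pi.add_apply, add_assoc, show k + (1 + 1) = k + 2 by ring]
      grind
    · rw [gA_snd, py_snd, dl_ladder_even h1 h, add_dotProduct, add_dotProduct]
      ring
  · refine Rot.ladder hr hr1 (rot_y h0 h1) (ladder_mul_pauli ?_ fun y => ?_) (kap_gA h0 h1)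
    · rw [gA_fst, py_fst, ladder_dl_odd h0 h]
    · rw [gA_snd, py_snd, add_dotProduct, add_dotProduct, dl_ladder_odd h1 h,
        dl_ladder_odd (by omega) (by omega), dl_ladder_even (by omega) (by omega)]
      have e1 := zmod2_add_self (dl n (k - 1) ⬝ᵥ y)
      have e2 := zmod2_add_self (dl n (k - 2) ⬝ᵥ y)
      have e3 := zmod2_add_self (dl n (k - 3) ⬝ᵥ y)
      rw [show k - 2 - 1 = k - 3 by ring, show k - 1 - 1 = k - 2 by ring,
        show k - 1 - 2 = k - 3 by ring]
      linear_combination e1 + e2 + e3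

lemma rot_gB {n r : ℕ} (hr : ladderCNOT n ^ r = 1) (hr1 : 1 ≤ r) {k : ℤ} (h0 : 0 ≤ k)
    (h1 : k < n) : Rot n r 1 (gB n k) := by
  rcases Int.emod_two_eq_zero_or_one k with h | h
  · refine Rot.ladder hr hr1 (rot_y h0 h1) (ladder_mul_pauli ?_ fun y => ?_) (kap_gB h0 h1)
    · rw [gB_fst, py_fst, ladder_dl_even h0 h]
    · rw [gB_snd, py_snd, add_dotProduct, dl_ladder_even h1 h,
        dl_ladder_odd (by omega) (by omega), show k - 1 - 1 = k - 2 by ring]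
      linear_combination zmod2_add_self (dl n (k - 1) ⬝ᵥ y) + zmod2_add_self (dl n (k - 2) ⬝ᵥ y)
  · refine Rot.ladder' hr hr1 (rot_y h0 h1) (ladder_mul_pauli ?_ fun y => ?_) (kap_gB h0 h1)
    · rw [gB_fst, py_fst, ladder_add, ladder_add, ladder_dl_odd h0 h,
        ladder_dl_even (by omega) (by omega), ladder_dl_odd (by omega) (by omega)]
      ext i
      have := zmod2_add_self (dl n (k + 1) i)
      have := zmod2_add_self (dl n (k + 2) i)
      have := zmod2_add_self (dl n (k + 3) i)
      simp only [Pi.add_apply, add_assoc, show k + (1 + 1) = k + 2 by ring,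
        show k + (2 + 1) = k + 3 by ring, show k + (1 + 2) = k + 3 by ring]
      grind
    · rw [gB_snd, py_snd, dl_ladder_odd h1 h, add_dotProduct]
      ring

/-! ### Two-body strings and transport -/

-- The same list of commutation rules is used for every string.
set_option linter.unusedSimpArgs false

/-- Conjugation by a `Y` rotation, which exchanges `X` and `Z` on its qubit for free. -/
lemma Rot.flip {n r c : ℕ} {q s : PVec n} {k : ℤ} (hq : Rot n r c q) (h0 : 0 ≤ k) (h1 : k < n)
    (h : sym (py n k) q = 1) (hs : s = py n k + q) : Rot n r c s := by
  simpa using Rot.conj (rot_y h0 h1) hq h hs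

/-- The same free exchange on the first string of a controlled gate. -/
lemma Tgt.flip {n r c : ℕ} {p q s : PVec n} {k : ℤ} (hp : Tgt n r c p q) (h0 : 0 ≤ k) (h1 : k < n)
    (h : sym (py n k) p = 1) (h' : sym (py n k) q = 0) (hs : s = py n k + p) : Tgt n r c s q := by
  simpa using Tgt.conj (rot_y h0 h1) hp h h' hs

/-- The string `X_k Z_{k+1} Y_{k+2}`, the product of `gB` at `k` with a flipped `gA` at `k + 1`. -/
lemma rot_xzy {n r : ℕ} (hr : ladderCNOT n ^ r = 1) (hr1 : 1 ≤ r) {k : ℤ} (h0 : 0 ≤ k)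
    (h1 : k + 2 < n) : Rot n r 3 (px n k + pz n (k + 1) + py n (k + 2)) := by
  have h2 := pvec_two (n := n)
  have hA : Rot n r 1 (pz n (k - 1) + pz n k + py n (k + 1) + pz n (k + 2)) := by
    refine (rot_gA hr hr1 (k := k + 1) (by omega) (by omega)).flip (k := k + 2) (by omega)
      (by omega) ?_ ?_
    · simp (disch := omega) only [gA, py, sym_add_left, sym_add_right, sym_xx, sym_zz, sym_xz_eq,
        sym_xz_ne, sym_zx_eq, sym_zx_ne]
      decide
    · grind [gA, py]
  refine hA.conj (rot_gB hr hr1 (k := k) (by omega) (by omega)) ?_ ?_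
  · simp (disch := omega) only [gB, py, sym_add_left, sym_add_right, sym_xx, sym_zz, sym_xz_eq,
      sym_xz_ne, sym_zx_eq, sym_zx_ne]
    decide
  · grind [gB, py]

/-- The string `Y_k X_{k+1} Z_{k+2}`, the product of `gB` at `k + 1` with a flipped `gA` at
`k + 2`. -/
lemma rot_yxz {n r : ℕ} (hr : ladderCNOT n ^ r = 1) (hr1 : 1 ≤ r) {k : ℤ} (h0 : 0 ≤ k)
    (h1 : k + 2 < n) : Rot n r 3 (py n k + px n (k + 1) + pz n (k + 2)) := by
  have h2 := pvec_two (n := n)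
  have hA : Rot n r 1 (px n k + pz n (k + 1) + py n (k + 2) + px n (k + 3)) := by
    refine (rot_gA hr hr1 (k := k + 2) (by omega) (by omega)).flip (k := k) (by omega)
      (by omega) ?_ ?_
    · simp (disch := omega) only [gA, py, sym_add_left, sym_add_right, sym_xx, sym_zz, sym_xz_eq,
        sym_xz_ne, sym_zx_eq, sym_zx_ne]
      decide
    · grind [gA, py]
  refine hA.conj (rot_gB hr hr1 (k := k + 1) (by omega) (by omega)) ?_ ?_
  · simp (disch := omega) only [gB, py, sym_add_left, sym_add_right, sym_xx, sym_zz, sym_xz_eq,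
      sym_xz_ne, sym_zx_eq, sym_zx_ne]
    decide
  · grind [gB, py]

/-- The rotations about `Y_i X_j` and `Z_i Y_j`, each in five periods. Quarter turns about them
move a `Z` between the qubits `i` and `j`, in both directions. -/
def Hop (n r : ℕ) (i j : ℤ) : Prop :=
  Rot n r 5 (py n i + px n j) ∧ Rot n r 5 (pz n i + py n j)

lemma hop_three {n r : ℕ} (hr : ladderCNOT n ^ r = 1) (hr1 : 1 ≤ r) {k : ℤ} (h0 : 0 ≤ k)
    (h1 : k + 3 < n) : Hop n r k (k + 3) := by
  have h2 := pvec_two (n := n)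
  constructor
  · refine (rot_gA hr hr1 (k := k + 2) (by omega) (by omega)).conj
      (rot_xzy hr hr1 (k := k) (by omega) (by omega)) ?_ ?_
    · simp (disch := omega) only [gA, py, sym_add_left, sym_add_right, sym_xx, sym_zz, sym_xz_eq,
        sym_xz_ne, sym_zx_eq, sym_zx_ne]
      decide
    · grind [gA, py]
  · refine (rot_gB hr hr1 (k := k + 1) (by omega) (by omega)).conj
      (rot_yxz hr hr1 (k := k + 1) (by omega) (by omega)) ?_ ?_
    · simp (disch := omega) only [gB, py, sym_add_left, sym_add_right, sym_xx, sym_zz, sym_xz_eq,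
        sym_xz_ne, sym_zx_eq, sym_zx_ne]
      decide
    · grind [gB, py]

lemma rot_zy_two {n r : ℕ} (hr : ladderCNOT n ^ r = 1) (hr1 : 1 ≤ r) {k : ℤ} (h0 : 0 ≤ k)
    (h1 : k + 3 < n) : Rot n r 5 (pz n k + py n (k + 2)) := by
  have h2 := pvec_two (n := n)
  have hB1 : Rot n r 1 (pz n k + py n (k + 1) + px n (k + 2) + pz n (k + 3)) := by
    refine (rot_gB hr hr1 (k := k + 1) (by omega) (by omega)).flip (k := k + 3) (by omega)
      (by omega) ?_ ?_
    · simp (disch := omega) only [gB, py, sym_add_left, sym_add_right, sym_xx, sym_zz, sym_xz_eq,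
        sym_xz_ne, sym_zx_eq, sym_zx_ne]
      decide
    · grind [gB, py]
  have hB2 : Rot n r 1 (pz n k + py n (k + 1) + pz n (k + 2) + pz n (k + 3)) := by
    refine hB1.flip (k := k + 2) (by omega) (by omega) ?_ ?_
    · simp (disch := omega) only [py, sym_add_left, sym_add_right, sym_xx, sym_zz, sym_xz_eq,
        sym_xz_ne, sym_zx_eq, sym_zx_ne]
      decide
    · grind [py]
  refine hB2.conj (rot_yxz hr hr1 (k := k + 1) (by omega) (by omega)) ?_ ?_
  · simp (disch := omega) only [py, sym_add_left, sym_add_right, sym_xx, sym_zz, sym_xz_eq,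
      sym_xz_ne, sym_zx_eq, sym_zx_ne]
    decide
  · grind [py]

lemma hop_two {n r : ℕ} (hr : ladderCNOT n ^ r = 1) (hr1 : 1 ≤ r) {k : ℤ} (h0 : 1 ≤ k)
    (h1 : k + 3 < n) : Hop n r k (k + 2) := by
  have h2 := pvec_two (n := n)
  refine ⟨?_, rot_zy_two hr hr1 (by omega) h1⟩
  have hA1 : Rot n r 1 (px n (k - 1) + pz n k + py n (k + 1) + px n (k + 2)) := by
    refine (rot_gA hr hr1 (k := k + 1) (by omega) (by omega)).flip (k := k - 1) (by omega)
      (by omega) ?_ ?_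
    · simp (disch := omega) only [gA, py, sym_add_left, sym_add_right, sym_xx, sym_zz, sym_xz_eq,
        sym_xz_ne, sym_zx_eq, sym_zx_ne]
      decide
    · grind [gA, py]
  have hA2 : Rot n r 1 (px n (k - 1) + px n k + py n (k + 1) + px n (k + 2)) := by
    refine hA1.flip (k := k) (by omega) (by omega) ?_ ?_
    · simp (disch := omega) only [py, sym_add_left, sym_add_right, sym_xx, sym_zz, sym_xz_eq,
        sym_xz_ne, sym_zx_eq, sym_zx_ne]
      decide
    · grind [py]
  refine hA2.conj (rot_xzy hr hr1 (k := k - 1) (by omega) (by omega)) ?_ ?_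
  · simp (disch := omega) only [py, sym_add_left, sym_add_right, sym_xx, sym_zz, sym_xz_eq,
      sym_xz_ne, sym_zx_eq, sym_zx_ne]
    decide
  · grind [py]

/-- The controlled gate of `Z_i` and `Z_j` (a controlled `Z`, for all signs) is realised in `c`
periods of the ladder. -/
def CZT (n r c : ℕ) (i j : ℤ) : Prop := Tgt n r c (pz n i) (pz n j)

lemma CZT.symm {n r c : ℕ} {i j : ℤ} (h : CZT n r c i j) : CZT n r c j i :=
  Tgt.symm h (sym_zz i j)

/-- The first string runs through `Z_i`, `X_i`, `Y_i Y_k` and `Z_k`, where `k` is the new qubit. -/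
lemma CZT.hop {n r c : ℕ} {i i' j : ℤ} (h : CZT n r c i j) (hh : Hop n r i i') (hi : 0 ≤ i)
    (hin : i < n) (hi' : 0 ≤ i') (hin' : i' < n) (h1 : i ≠ i') (h2 : i ≠ j) (h3 : i' ≠ j) :
    CZT n r (c + 20) i' j := by
  have two := pvec_two (n := n)
  have s1 : Tgt n r c (px n i) (pz n j) := by
    refine Tgt.flip (k := i) h hi hin ?_ ?_ ?_
    · simp (disch := omega) only [py, sym_add_left, sym_zz, sym_xz_eq]
      decide
    · simp (disch := omega) only [py, sym_add_left, sym_zz, sym_xz_ne]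
      decide
    · grind [py]
  have s2 : Tgt n r (2 * 5 + c) (py n i + py n i') (pz n j) := by
    refine Tgt.conj hh.2 s1 ?_ ?_ ?_
    · simp (disch := omega) only [py, sym_add_left, sym_xx, sym_zx_eq, sym_zx_ne]
      decide
    · simp (disch := omega) only [py, sym_add_left, sym_zz, sym_xz_ne]
      decide
    · grind [py]
  have s3 : Tgt n r (2 * 5 + (2 * 5 + c)) (pz n i') (pz n j) := by
    refine Tgt.conj hh.1 s2 ?_ ?_ ?_
    · simp (disch := omega) only [py, sym_add_left, sym_add_right, sym_xx, sym_zz, sym_zx_eq,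
        sym_zx_ne, sym_xz_eq, sym_xz_ne]
      decide
    · simp (disch := omega) only [py, sym_add_left, sym_zz, sym_xz_ne]
      decide
    · grind [py]
  rw [show c + 20 = 2 * 5 + (2 * 5 + c) by ring]
  exact s3

/-- The hop in the opposite direction, through `Z_k`, `Y_i Y_k`, `X_i` and `Z_i`,
where `k` is the old qubit. -/
lemma CZT.hop' {n r c : ℕ} {i i' j : ℤ} (h : CZT n r c i' j) (hh : Hop n r i i') (hi : 0 ≤ i)
    (hin : i < n) (hi' : 0 ≤ i') (hin' : i' < n) (h1 : i ≠ i') (h2 : i ≠ j) (h3 : i' ≠ j) :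
    CZT n r (c + 20) i j := by
  have two := pvec_two (n := n)
  have s1 : Tgt n r (2 * 5 + c) (py n i + py n i') (pz n j) := by
    refine Tgt.conj hh.1 h ?_ ?_ ?_
    · simp (disch := omega) only [py, sym_add_left, sym_zz, sym_xz_eq, sym_xz_ne]
      decide
    · simp (disch := omega) only [py, sym_add_left, sym_zz, sym_xz_ne]
      decide
    · grind [py]
  have s2 : Tgt n r (2 * 5 + (2 * 5 + c)) (px n i) (pz n j) := by
    refine Tgt.conj hh.2 s1 ?_ ?_ ?_
    · simp (disch := omega) only [py, sym_add_left, sym_add_right, sym_xx, sym_zz, sym_zx_eq,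
        sym_zx_ne, sym_xz_eq, sym_xz_ne]
      decide
    · simp (disch := omega) only [py, sym_add_left, sym_zz, sym_xz_ne]
      decide
    · grind [py]
  have s3 : Tgt n r (2 * 5 + (2 * 5 + c)) (pz n i) (pz n j) := by
    refine Tgt.flip (k := i) s2 hi hin ?_ ?_ ?_
    · simp (disch := omega) only [py, sym_add_left, sym_xx, sym_zx_eq]
      decide
    · simp (disch := omega) only [py, sym_add_left, sym_zz, sym_xz_ne]
      decide
    · grind [py]
  rw [show c + 20 = 2 * 5 + (2 * 5 + c) by ring]
  exact s3

/-- A first controlled gate, on the last two qubits, built on `V = Y_3`. The string `Y_0 X_1` is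
`gA` at the boundary, where its `Z` factors fall outside the register. -/
lemma czt_base {n r : ℕ} (hr : ladderCNOT n ^ r = 1) (hr1 : 1 ≤ r) (hn : 6 ≤ n) :
    CZT n r 17 0 1 := by
  have two := pvec_two (n := n)
  have r0 : Rot n r 5 (py n 3 + pz n 0) := by
    have := (hop_three hr hr1 (k := 0) (by omega) (by omega)).2
    rw [add_comm]
    simpa using this
  have r1 : Rot n r 5 (py n 3 + pz n 1) := by
    have := rot_zy_two hr hr1 (k := 1) (by omega) (by omega)
    rw [add_comm]
    simpa using this
  have z1 : pz n (0 - 1) = 0 := by rw [pz, dl_eq_zero (by omega)]; rfl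
  have z2 : pz n (0 - 2) = 0 := by rw [pz, dl_eq_zero (by omega)]; rfl
  have a : Rot n r 1 (py n 0 + px n 1) := by
    have := rot_gA hr hr1 (k := 0) (by omega) (by omega)
    simpa only [gA, z1, z2, zero_add] using this
  have r2 : Rot n r 7 (py n 3 + px n 0 + px n 1) := by
    refine a.conj r0 ?_ ?_
    · simp (disch := omega) only [py, sym_add_left, sym_add_right, sym_xx, sym_zz, sym_zx_eq,
        sym_zx_ne, sym_xz_eq, sym_xz_ne]
      decide
    · grind [py]
  have r3 : Rot n r 7 (py n 3 + pz n 0 + px n 1) := by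
    refine r2.flip (k := 0) (by omega) (by omega) ?_ ?_
    · simp (disch := omega) only [py, sym_add_left, sym_add_right, sym_xx, sym_zz, sym_zx_eq,
        sym_zx_ne, sym_xz_eq, sym_xz_ne]
      decide
    · grind [py]
  have r4 : Rot n r 7 (py n 3 + pz n 0 + pz n 1) := by
    refine r3.flip (k := 1) (by omega) (by omega) ?_ ?_
    · simp (disch := omega) only [py, sym_add_left, sym_add_right, sym_xx, sym_zz, sym_zx_eq,
        sym_zx_ne, sym_xz_eq, sym_xz_ne]
      decide
    · grind [py]
  have hc : ∀ j : ℤ, j ≠ 3 → sym (py n 3) (pz n j) = 0 := by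
    intro j hj
    simp (disch := omega) only [py, sym_add_left, sym_zz, sym_xz_ne]
    decide
  exact Tgt.base (rot_y (by omega) (by omega)) r0 r1 r4 (kap_zz 0 0) (kap_zz 1 1)
    (hc 0 (by omega)) (hc 1 (by omega)) (sym_zz 0 1)

/-! ### Paths between arbitrary qubits -/

/-- Repeated hops of length `3` that do not meet the other qubit `j`. -/
lemma CZT.climb {n r c : ℕ} (hr : ladderCNOT n ^ r = 1) (hr1 : 1 ≤ r) {i j : ℤ}
    (h : CZT n r c i j) (hi : 0 ≤ i) (m : ℕ) (hm : i + 3 * m < n)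
    (hj : j < i ∨ i + 3 * m < j) : CZT n r (c + 20 * m) (i + 3 * m) j := by
  induction m with
  | zero => simpa using h
  | succ m ih =>
    push_cast at hm hj ⊢
    have h1 := ih (by omega) (by omega)
    have h2 := h1.hop (hop_three hr hr1 (k := i + 3 * m) (by omega) (by omega)) (by omega)
      (by omega) (by omega) (by omega) (by omega) (by omega) (by omega)
    convert h2 using 1 <;> omega

/-- One end of the base gate moves from `1` to `b`, avoiding `0`. The residue of `b` modulo `3`
decides which shorter hops are inserted: the paths start `1, 3, 6`, or `1, 4, 7`, or
`1, 4, 2, 5`. -/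
lemma czt_zero {n r : ℕ} (hr : ladderCNOT n ^ r = 1) (hr1 : 1 ≤ r) (hn : 6 ≤ n) {b : ℤ}
    (hb : 4 ≤ b) (hbn : b < n) : ∃ h : ℕ, 3 * (h : ℤ) ≤ b + 4 ∧ CZT n r (17 + 20 * h) b 0 := by
  have t0 := (czt_base hr hr1 hn).symm
  have h3 : b % 3 = 0 ∨ b % 3 = 1 ∨ b % 3 = 2 := by omega
  rcases h3 with h3 | h3 | h3
  · obtain ⟨m, hm⟩ : ∃ m : ℕ, b = 3 + 3 * m := ⟨((b - 3) / 3).toNat, by omega⟩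
    have t1 := t0.hop (hop_two hr hr1 (k := 1) (by omega) (by omega)) (by omega) (by omega)
      (by omega) (by omega) (by omega) (by omega) (by omega)
    have t2 := CZT.climb hr hr1 t1 (by omega) m (by omega) (by omega)
    refine ⟨1 + m, by push_cast; omega, ?_⟩
    convert t2 using 1 <;> omega
  · obtain ⟨m, hm⟩ : ∃ m : ℕ, b = 1 + 3 * m := ⟨((b - 1) / 3).toNat, by omega⟩
    have t2 := CZT.climb hr hr1 t0 (by omega) m (by omega) (by omega)
    refine ⟨m, by omega, ?_⟩
    convert t2 using 1
  · obtain ⟨m, hm⟩ : ∃ m : ℕ, b = 2 + 3 * m := ⟨((b - 2) / 3).toNat, by omega⟩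
    have t1 := t0.hop (hop_three hr hr1 (k := 1) (by omega) (by omega)) (by omega) (by omega)
      (by omega) (by omega) (by omega) (by omega) (by omega)
    have t2 := t1.hop' (hop_two hr hr1 (k := 2) (by omega) (by omega)) (by omega) (by omega)
      (by omega) (by omega) (by omega) (by omega) (by omega)
    have t3 := CZT.climb hr hr1 t2 (by omega) m (by omega) (by omega)
    refine ⟨2 + m, by push_cast; omega, ?_⟩
    convert t3 using 1
    omega

/-- The other end moves from `0` to `a`, along `0, 3, 6, …`, or `0, 3, 1, 4, …`, or `0, 3, 5, 8, …`;
these paths stay below `b` as they never exceed `max 3 a`. -/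
lemma czt_lt {n r : ℕ} (hr : ladderCNOT n ^ r = 1) (hr1 : 1 ≤ r) (hn : 6 ≤ n) {a b : ℤ}
    (ha : 4 ≤ a) (hab : a < b) (hbn : b < n) :
    ∃ h : ℕ, 3 * h ≤ 2 * n + 6 ∧ CZT n r (17 + 20 * h) a b := by
  obtain ⟨h, hh, t⟩ := czt_zero hr hr1 hn (b := b) (by omega) hbn
  have t0 := t.symm
  have h3 : a % 3 = 0 ∨ a % 3 = 1 ∨ a % 3 = 2 := by omega
  rcases h3 with h3 | h3 | h3
  · obtain ⟨m, hm⟩ : ∃ m : ℕ, a = 0 + 3 * m := ⟨(a / 3).toNat, by omega⟩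
    have t2 := CZT.climb hr hr1 t0 (by omega) m (by omega) (by omega)
    refine ⟨h + m, by omega, ?_⟩
    convert t2 using 1
    omega
  · obtain ⟨m, hm⟩ : ∃ m : ℕ, a = 1 + 3 * m := ⟨((a - 1) / 3).toNat, by omega⟩
    have t1 := t0.hop (hop_three hr hr1 (k := 0) (by omega) (by omega)) (by omega) (by omega)
      (by omega) (by omega) (by omega) (by omega) (by omega)
    have t2 := t1.hop' (hop_two hr hr1 (k := 1) (by omega) (by omega)) (by omega) (by omega)
      (by omega) (by omega) (by omega) (by omega) (by omega)
    have t3 := CZT.climb hr hr1 t2 (by omega) m (by omega) (by omega)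
    refine ⟨h + (2 + m), by omega, ?_⟩
    convert t3 using 1
    omega
  · obtain ⟨m, hm⟩ : ∃ m : ℕ, a = 5 + 3 * m := ⟨((a - 5) / 3).toNat, by omega⟩
    have t1 := t0.hop (hop_three hr hr1 (k := 0) (by omega) (by omega)) (by omega) (by omega)
      (by omega) (by omega) (by omega) (by omega) (by omega)
    have t2 := t1.hop (hop_two hr hr1 (k := 3) (by omega) (by omega)) (by omega) (by omega)
      (by omega) (by omega) (by omega) (by omega) (by omega)
    have t3 := CZT.climb hr hr1 t2 (by omega) m (by omega) (by omega)
    refine ⟨h + (2 + m), by omega, ?_⟩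
    convert t3 using 1 <;> omega

lemma czt_ne {n r : ℕ} (hr : ladderCNOT n ^ r = 1) (hr1 : 1 ≤ r) (hn : 6 ≤ n) {a b : ℤ}
    (ha : 4 ≤ a) (hb : 4 ≤ b) (hab : a ≠ b) (han : a < n) (hbn : b < n) :
    ∃ h : ℕ, 3 * h ≤ 2 * n + 6 ∧ CZT n r (17 + 20 * h) a b := by
  rcases hab.lt_or_gt with h | h
  · exact czt_lt hr hr1 hn ha h hbn
  · obtain ⟨m, hm, t⟩ := czt_lt hr hr1 hn hb h han
    exact ⟨m, hm, t.symm⟩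

/-! ### CNOT gates and embedded circuits -/

lemma cnot_eq_ctl {n : ℕ} {c t : Fin n} (hct : c ≠ t) :
    CNOTg c t = ctl (pauli (pz n (n - 1 - c))) (pauli (px n (n - 1 - t))) := by
  have hz : ∀ y, dl n (n - 1 - c) ⬝ᵥ y = y c := fun y => dl_dot_of_lt c.2 (by ring) y
  have ht : dl n (n - 1 - t) t = 1 := if_pos (by ring)
  have hne : ∀ j : Fin n, j ≠ t → dl n (n - 1 - t) j = 0 := fun j hj =>
    if_neg fun h => hj (Fin.ext (by omega))
  have hmul : pauli (pz n (n - 1 - c)) * pauli (px n (n - 1 - t))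
      = pauli (pz n (n - 1 - c) + px n (n - 1 - t)) := by
    rw [pauli_mul, kap_zx_ne, chi_zero, one_smul]
    intro h
    exact hct (Fin.ext (by omega))
  rw [ctl, hmul]
  ext x y
  have hxd : y + dl n (n - 1 - t) ≠ y := fun h => by
    have := congrFun h t
    rw [Pi.add_apply, ht] at this
    simp at this
  have hup : Function.update y t (y t + y c) = if y c = 0 then y else y + dl n (n - 1 - t) := by
    split_ifs with h
    · rw [h, add_zero, Function.update_eq_self]
    · have h1 : y c = 1 := (zmod2_cases _).resolve_left h
      ext j
      by_cases hj : j = t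
      · subst hj; simp [h1, ht]
      · simp [hj, hne j hj]
  simp only [CNOTg, pauli, pz, px, Matrix.of_apply, Matrix.smul_apply, Matrix.sub_apply,
    Matrix.add_apply, Matrix.one_apply, smul_eq_mul, Prod.fst_add, Prod.snd_add, zero_add,
    add_zero, hz, hup, zero_dotProduct, chi_zero]
  rcases zmod2_cases (y c) with h | h
  · simp only [h, if_true, chi_zero]
    split_ifs <;> norm_num
  · simp only [h, one_ne_zero, if_false, chi_one]
    by_cases h1 : x = y
    · have : x ≠ y + dl n (n - 1 - t) := h1 ▸ hxd.symm
      simp only [if_pos h1, if_neg this]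
      norm_num
    · by_cases h2 : x = y + dl n (n - 1 - t)
      · simp only [if_neg h1, if_pos h2]; norm_num
      · simp only [if_neg h1, if_neg h2]; norm_num

lemma reach_cnot {n r : ℕ} (hr : ladderCNOT n ^ r = 1) (hr1 : 1 ≤ r) (hn : 6 ≤ n) {c t : Fin n}
    (hc : (c : ℕ) + 4 < n) (ht : (t : ℕ) + 4 < n) (hct : c ≠ t) :
    ∃ h : ℕ, 3 * h ≤ 2 * n + 6 ∧ Reach n ((17 + 20 * h) * r) (CNOTg c t) := by
  have hne : (c : ℕ) ≠ t := fun h => hct (Fin.ext h)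
  have two := pvec_two (n := n)
  obtain ⟨h, hh, T⟩ := czt_ne hr hr1 hn (a := n - 1 - c) (b := n - 1 - t) (by omega) (by omega)
    (by omega) (by omega) (by omega)
  refine ⟨h, hh, ?_⟩
  have T1 : Tgt n r (17 + 20 * h) (px n (n - 1 - t)) (pz n (n - 1 - c)) := by
    refine Tgt.flip (k := n - 1 - t) T.symm (by omega) (by omega) ?_ ?_ ?_
    · simp (disch := omega) only [py, sym_add_left, sym_zz, sym_xz_eq]
      decide
    · simp (disch := omega) only [py, sym_add_left, sym_zz, sym_xz_ne]
      decide
    · grind [py]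
  have T2 := Tgt.symm T1 (sym_xz_ne (by omega)) 1 1 (Or.inl rfl) (Or.inl rfl)
  rwa [one_smul, one_smul, ← cnot_eq_ctl hct] at T2

lemma embed_apply {N A : ℕ} (U : QOp N) (x y : QState (N + A)) :
    embed N A U x y = if ∀ i : Fin A, x (Fin.natAdd N i) = y (Fin.natAdd N i) then
      U (fun i => x (Fin.castAdd A i)) (fun i => y (Fin.castAdd A i)) else 0 := by
  simp [embed]

lemma embed_one {N A : ℕ} : embed N A 1 = 1 := by
  ext x y
  rw [embed_apply]
  simp only [Matrix.one_apply]
  by_cases h : x = y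
  · subst h; simp
  · rw [if_neg h]
    split_ifs with h1 h2
    · refine absurd (funext fun j => ?_) h
      induction j using Fin.addCases with
      | left i => exact congrFun h2 i
      | right i => exact h1 i
    · rfl
    · rfl

lemma embed_mul {N A : ℕ} (U V : QOp N) : embed N A (U * V) = embed N A U * embed N A V := by
  ext x y
  rw [Matrix.mul_apply]
  -- Only intermediate states agreeing with `x` on the ancillas contribute.
  let e : QState N → QState (N + A) := fun z => Fin.append z fun i => x (Fin.natAdd N i)
  have he : Function.Injective e := fun z w h => funext fun i => by
    simpa [e] using congrFun h (Fin.castAdd A i)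
  have h0 : ∀ w ∉ Set.range e, embed N A U x w * embed N A V w y = 0 := fun w hw => by
    rw [embed_apply, if_neg, zero_mul]
    refine fun h => hw ⟨fun i => w (Fin.castAdd A i), funext fun j => ?_⟩
    induction j using Fin.addCases with
    | left i => simp [e]
    | right i => simp [e, h i]
  rw [← Fintype.sum_of_injective e he (fun z => embed N A U x (e z) * embed N A V (e z) y) _ h0
    fun _ => rfl]
  simp only [embed_apply, e, Fin.append_left, Fin.append_right, if_true, implies_true]
  split_ifs with h
  · rw [Matrix.mul_apply]
  · simp

lemma embed_gate1 {N A : ℕ} (g : Matrix (ZMod 2) (ZMod 2) ℂ) (k : Fin N) :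
    embed N A (gate1 g k) = gate1 g (Fin.castAdd A k) := by
  ext x y
  rw [embed_apply]
  simp only [gate1, Matrix.of_apply, ← ite_and]
  refine if_congr ⟨fun h j => ?_, fun h => ⟨fun i => h _ ?_, fun i hi => h _ ?_⟩⟩ rfl rfl
  · induction j using Fin.addCases with
    | left i => exact fun hj => h.2 i fun hi => hj (by rw [hi])
    | right i => exact fun _ => h.1 i
  · intro h'
    have := congrArg Fin.val h'
    simp at this
    omega
  · exact fun h' => hi (Fin.castAdd_injective N A h')

lemma embed_cnot {N A : ℕ} (k l : Fin N) :
    embed N A (CNOTg k l) = CNOTg (Fin.castAdd A k) (Fin.castAdd A l) := by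
  ext x y
  rw [embed_apply]
  simp only [CNOTg, Matrix.of_apply, ← ite_and]
  have hne : ∀ i : Fin A, Fin.natAdd N i ≠ Fin.castAdd A l := fun i h' => by
    have := congrArg Fin.val h'
    simp at this
    omega
  refine if_congr ⟨fun h => funext fun j => ?_, fun h => ⟨fun i => ?_, funext fun i => ?_⟩⟩ rfl rfl
  · induction j using Fin.addCases with
    | left i =>
      have := congrFun h.2 i
      by_cases hi : i = l
      · subst hi; simpa using this
      · rw [Function.update_of_ne hi] at this
        rw [Function.update_of_ne fun h' => hi (Fin.castAdd_injective N A h')]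
        exact this
    | right i => rw [Function.update_of_ne (hne i)]; exact h.1 i
  · rw [h, Function.update_of_ne (hne i)]
  · rw [h]
    by_cases hi : i = l
    · subst hi; simp
    · have hi2 : Fin.castAdd A i ≠ Fin.castAdd A l := fun e => hi (Fin.castAdd_injective N A e)
      rw [Function.update_of_ne hi, Function.update_of_ne hi2]

/-- The least power of two not below `n = N + 4` is a period of the ladder; it is at most `2 n - 1`,
and exactly `8` for `N = 2`, where the crude estimate is too weak. -/
lemma cost_bound {N : ℕ} (hN : 2 ≤ N) : ∃ r : ℕ, 1 ≤ r ∧ ladderCNOT (N + 4) ^ r = 1 ∧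
    ∀ h : ℕ, 3 * h ≤ 2 * (N + 4) + 6 → (17 + 20 * h) * r ≤ 96 * N ^ 2 + 400 * N := by
  rcases hN.eq_or_lt with rfl | hN
  · refine ⟨2 ^ 3, by norm_num, ladderCNOT_pow 3 (by norm_num), fun h hh => ?_⟩
    norm_num
    omega
  · set a := Nat.clog 2 (N + 4) with ha
    have h1 : N + 4 ≤ 2 ^ a := Nat.le_pow_clog (by norm_num) _
    have h2 : 2 ^ a ≤ 2 * N + 7 := by
      have h3 := Nat.pow_pred_clog_lt_self (b := 2) (by norm_num) (x := N + 4) (by omega)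
      have h4 : 0 < a := Nat.clog_pos (by norm_num) (by omega)
      obtain ⟨b, hb⟩ : ∃ b, a = b + 1 := ⟨a - 1, by omega⟩
      rw [← ha, hb] at h3
      simp at h3
      rw [hb, pow_succ]
      omega
    refine ⟨2 ^ a, Nat.one_le_two_pow, ladderCNOT_pow a h1, fun h hh => ?_⟩
    generalize 2 ^ a = r at h2
    have h5 : 3 * (17 + 20 * h) ≤ 40 * N + 331 := by omega
    have h6 : 3 * (17 + 20 * h) * r ≤ (40 * N + 331) * (2 * N + 7) := Nat.mul_le_mul h5 h2
    nlinarith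

/-- computational universality of the Ry-CNOT ansatz: for `N ≥ 2` and any
`N`-qubit circuit `U = g_m ⋯ g_1` (`g_1` applied first, i.e. the product of the list
`gs = [g_m, …, g_1]`) whose gates are `Ry` rotations or CNOTs, there are a depth
`M ≤ (96·N² + 400·N)·m` and angles such that the `(N+4)`-qubit depth-`M` Ry-CNOT ansatz
equals `U` on qubits `1,…,N` tensored with the identity on qubits `N+1,…,N+4`. -/
theorem ryCNOT_computationally_universal (N : ℕ) (hN : 2 ≤ N) (gs : List (QOp N))
    (hg : ∀ g ∈ gs,
      (∃ (θ : ℝ) (k : Fin N), g = gate1 (RyM θ) k) ∨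
        (∃ k l : Fin N, k ≠ l ∧ g = CNOTg k l)) :
    ∃ M : ℕ, M ≤ (96 * N ^ 2 + 400 * N) * gs.length ∧
      ∃ α : ℕ → Fin (N + 4) → ℝ,
        ansatzY (N + 4) α M = embed N 4 gs.prod := by
  obtain ⟨r, hr1, hr, hcost⟩ := cost_bound hN
  change ∃ M : ℕ, M ≤ _ ∧ Reach (N + 4) M (embed N 4 gs.prod)
  induction gs with
  | nil => exact ⟨0, by simp, by rw [List.prod_nil, embed_one]; exact reach_one⟩
  | cons g gs ih =>
    obtain ⟨M, hM, hR⟩ := ih fun g' hg' => hg g' (List.mem_cons_of_mem _ hg')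
    have key : ∃ K : ℕ, K ≤ 96 * N ^ 2 + 400 * N ∧ Reach (N + 4) K (embed N 4 g) := by
      rcases hg g List.mem_cons_self with ⟨θ, k, rfl⟩ | ⟨k, l, hkl, rfl⟩
      · exact ⟨0, Nat.zero_le _, by rw [embed_gate1]; exact reach_gate1 _ _⟩
      · obtain ⟨h, hh, hR'⟩ := reach_cnot hr hr1 (by omega) (c := Fin.castAdd 4 k)
          (t := Fin.castAdd 4 l) (by simp) (by simp)
          fun h => hkl (Fin.castAdd_injective N 4 h)
        exact ⟨_, hcost h hh, by rw [embed_cnot]; exact hR'⟩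
    obtain ⟨K, hK, hRK⟩ := key
    refine ⟨K + M, ?_, by rw [List.prod_cons, embed_mul]; exact hRK.mul hR⟩
    rw [List.length_cons, mul_add, mul_one, add_comm]
    exact Nat.add_le_add hM hK
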